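/- arXiv:2103.11347 — 2 statements merged into one kernel-verified Lean document; each statement's English description precedes it below -/
import Mathlib

section
/- Let β ∈ GL₃(ℂ) induce an automorphism of ℙ²(ℂ) and let L₁, L₂, L₃ be lines in ℙ²(ℂ) lying in pairwise distinct β-orbits (β^k(L_i) ≠ L_j for all k ∈ ℤ and all i ≠ j). Let P ∈ L₁ be a point such that the set of points of the β-orbit of P lying on L₁ is infinite, and such that β^m(P) ∈ L₂ for some integer m and β^k(P) ∈ L₃ for some integer k. Then the β-orbit of the line L₁ is finite (the set {β^n(L₁) : n ∈ ℤ} of lines is finite), and only finitely many points of the β-orbit of P lie on L₂ ∪ L₃ (the set {Q ∈ ℙ²(ℂ) : Q = β^n(P) for some n ∈ ℤ and Q ∈ L₂ ∪ L₃} is finite). -/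
noncomputable section

open Projectivization

/-- The projective plane `ℙ²(ℂ)`. -/
abbrev ProjPlane := Projectivization ℂ (Fin 3 → ℂ)

/-- The automorphism of `ℙ²(ℂ)` induced by a linear automorphism `g` of `ℂ³`. -/
def projAct (g : (Fin 3 → ℂ) ≃ₗ[ℂ] (Fin 3 → ℂ)) (x : ProjPlane) : ProjPlane :=
  Projectivization.map g.toLinearMap g.injective x

/-- The point `P ∈ ℙ²(ℂ)` lies on the line which is the projectivization of the
2-dimensional subspace `W ⊂ ℂ³`. -/
def OnLine (P : ProjPlane) (W : Submodule ℂ (Fin 3 → ℂ)) : Prop :=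
  P.submodule ≤ W

/-!
A line containing infinitely many points of the orbit of `P` should be a translate of one fixed
`β ^ N`-invariant plane in the underlying vector space: the span `U` of the `β ^ N`-orbit of `P`.
Granting this, two such lines lie in the same `β`-orbit, and this orbit is finite since `β ^ N`
fixes `U`.

What has to be shown is a uniform form of the Skolem-Mahler-Lech theorem: for a suitable `N ≠ 0`,
an orbit of `β ^ N` meeting a subspace infinitely often lies in it. This is Hansel's elementary
version of the `p`-adic argument. Choose a transcendence basis `t` of the field and integers `a`;
in the integral closure of `ℤ[(t - a) / p²]`, reduction modulo `p²` sends `t` to `a`, so for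
generic `a` and large `p` the entries of `β`, up to a common denominator, become integral over `ℤ`
modulo `p²`. They generate a finite ring, so some power of `β` is `1 + p² M` up to a scalar. The
binomial expansion of `(1 + p² M) ^ n` is, up to factors prime to `p`, polynomial in `p * n`;
hence if a linear form of it vanishes infinitely often, all its values are divisible by arbitrarily
high powers of `p`.
-/

section Hansel

open Finset Nat Polynomial

theorem exists_coprime_forall_factorial_dvd_mul_pow {p : ℕ} (hp : p.Prime) (m : ℕ) :
    ∃ c, p.Coprime c ∧ ∀ k ≤ m, k ! ∣ c * p ^ k := by
  have := Fact.mk hp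
  refine ⟨m ! / p ^ (m !).factorization p, coprime_ordCompl hp m.factorial_ne_zero, fun k hk ↦ ?_⟩
  have hval : padicValNat p k ! ≤ k := calc
    padicValNat p k ! ≤ (p - 1) * padicValNat p k ! :=
      Nat.le_mul_of_pos_left _ (Nat.sub_pos_of_lt hp.one_lt)
    _ ≤ k := (sub_one_mul_padicValNat_factorial k).trans_le (Nat.sub_le _ _)
  rw [← ordProj_mul_ordCompl_eq_self k ! p, mul_comm, factorization_def _ hp]
  exact mul_dvd_mul (by simpa only [factorization_def _ hp] using
    ordCompl_dvd_ordCompl_of_dvd (factorial_dvd_factorial hk) p) (pow_dvd_pow p hval)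

variable {R : Type*} [CommRing R]

theorem pow_card_dvd_eval_mul [IsDomain R] {a : R} (ha : a ≠ 0) {s : Finset R} {f : R[X]}
    (hs : ∀ t ∈ s, f.eval (a * t) = 0) (x : R) : a ^ #s ∣ f.eval (a * x) := by
  classical
  induction s using Finset.induction_on generalizing f with
  | empty => simp
  | insert t s hts ih =>
    obtain ⟨g, rfl⟩ := dvd_iff_isRoot.2 (hs t (mem_insert_self t s))
    have hg : ∀ t' ∈ s, g.eval (a * t') = 0 := fun t' ht' ↦ by
      have hne : a * t' - a * t ≠ 0 :=
        sub_ne_zero.2 fun h ↦ hts (mul_left_cancel₀ ha h ▸ ht')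
      simpa [hne] using hs t' (mem_insert_of_mem ht')
    rw [card_insert_of_notMem hts, _root_.pow_succ', eval_mul, eval_sub, eval_X, eval_C, ← mul_sub]
    exact mul_dvd_mul (dvd_mul_right _ _) (ih hg)

-- With `c * p ^ k = k ! * e k`, multiplication by `c` turns the factor `x.choose k * p ^ (2 * k)`
-- into `e k * ∏ i < k, (p * x - p * i)`.
theorem exists_polynomial_eval_eq_mul_sum_choose {p : ℕ} (hp : p.Prime) (d : ℕ → R) (m : ℕ) :
    ∃ (c : ℕ) (f : R[X]), p.Coprime c ∧ ∀ x ≤ m, f.eval ((p * x : ℕ) : R) =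
      c * ∑ k ∈ range (x + 1), (x.choose k : R) * (p : R) ^ (2 * k) * d k := by
  obtain ⟨c, hcp, hc⟩ := exists_coprime_forall_factorial_dvd_mul_pow hp m
  have hc' : ∀ k, ∃ e, k ≤ m → c * p ^ k = k ! * e := fun k ↦ by
    by_cases hk : k ≤ m
    · exact (hc k hk).imp fun _ he _ ↦ he
    · exact ⟨0, fun h ↦ absurd h hk⟩
  choose e he using hc'
  refine ⟨c, ∑ k ∈ range (m + 1), C (d k * e k) * ∏ i ∈ range k, (X - C ((p * i : ℕ) : R)),
    hcp, fun x hx ↦ ?_⟩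
  have hextend : ∑ k ∈ range (x + 1), (x.choose k : R) * (p : R) ^ (2 * k) * d k =
      ∑ k ∈ range (m + 1), (x.choose k : R) * (p : R) ^ (2 * k) * d k := by
    refine sum_subset (range_subset_range.2 (by lia)) fun k _ hk ↦ ?_
    rw [choose_eq_zero_of_lt (by simpa using hk), cast_zero, zero_mul, zero_mul]
  rw [hextend, mul_sum, eval_finsetSum]
  refine sum_congr rfl fun k hk ↦ ?_
  have hprod : ∏ i ∈ range k, (((p * x : ℕ) : R) - ((p * i : ℕ) : R)) =
      (p : R) ^ k * (k ! * x.choose k : ℕ) := by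
    rw [← descFactorial_eq_factorial_mul_choose, ← descPochhammer_eval_eq_descFactorial,
      descPochhammer_eval_eq_prod_range]
    simp only [cast_mul, ← mul_sub, prod_mul_distrib, prod_const, card_range]
  have hek : (c : R) * (p : R) ^ k = k ! * e k := by
    exact_mod_cast congrArg (Nat.cast : ℕ → R) (he k (by simpa [Nat.lt_succ_iff] using hk))
  simp only [eval_mul, eval_C, eval_prod, eval_sub, eval_X, hprod]
  push_cast
  linear_combination (-(d k) * (p : R) ^ k * (x.choose k : R)) * hek

variable [IsDomain R] [CharZero R] {p : ℕ}

theorem sum_choose_mul_eq_zero_of_infinite (hp : p.Prime)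
    (hfin : ∀ z : R, z ≠ 0 → FiniteMultiplicity (p : R) z) {d : ℕ → R}
    (hinf : {n : ℕ | ∑ k ∈ range (n + 1), (n.choose k : R) * (p : R) ^ (2 * k) * d k = 0}.Infinite)
    (n : ℕ) : ∑ k ∈ range (n + 1), (n.choose k : R) * (p : R) ^ (2 * k) * d k = 0 := by
  by_contra hn
  obtain ⟨e, he⟩ := hfin _ hn
  obtain ⟨s, hs, hcard⟩ := hinf.exists_subset_card_eq (e + 1)
  obtain ⟨c, f, hpc, hf⟩ := exists_polynomial_eval_eq_mul_sum_choose hp d (max n (s.sup id))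
  have hroot : ∀ t ∈ s.map castEmbedding, f.eval ((p : R) * t) = 0 := fun t' ht' ↦ by
    obtain ⟨t, ht, rfl⟩ := mem_map.1 ht'
    have hzero := hs ht
    rw [Set.mem_ofPred_eq] at hzero
    rw [castEmbedding_apply, ← cast_mul, hf t (le_max_of_le_right (le_sup (f := id) ht)), hzero,
      mul_zero]
  have hdvd := pow_card_dvd_eval_mul (cast_ne_zero.2 hp.ne_zero) hroot n
  rw [← cast_mul, hf n (le_max_left _ _), card_map, hcard] at hdvd
  have hcop : IsCoprime ((p : R) ^ (e + 1)) c := hpc.cast.pow_left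
  exact he (hcop.dvd_of_dvd_mul_left hdvd)

theorem map_one_add_smul_pow_eq_zero_of_infinite (hp : p.Prime)
    (hfin : ∀ z : R, z ≠ 0 → FiniteMultiplicity (p : R) z) {K : Type*} [Field K] [Algebra R K]
    [IsFractionRing R K] {E : Type*} [Ring E] [Algebra R E] [Module.Finite R E] (ψ : E →ₗ[R] K)
    (M : E) (hinf : {n : ℕ | ψ ((1 + (p : R) ^ 2 • M) ^ n) = 0}.Infinite) (n : ℕ) :
    ψ ((1 + (p : R) ^ 2 • M) ^ n) = 0 := by
  obtain ⟨a, ha, hψ⟩ : IsFractional (nonZeroDivisors R) (LinearMap.range ψ) :=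
    FractionalIdeal.isFractional_of_fg (Submodule.fg_range ψ)
  have hint : ∀ k, ∃ d : R, algebraMap R K d = a • ψ (M ^ k) := fun k ↦ hψ _ ⟨_, rfl⟩
  choose d hd using hint
  have hexpand : ∀ n : ℕ, algebraMap R K
      (∑ k ∈ range (n + 1), (n.choose k : R) * (p : R) ^ (2 * k) * d k) =
        a • ψ ((1 + (p : R) ^ 2 • M) ^ n) := fun n ↦ by
    rw [add_comm 1 _, (Commute.one_right _).add_pow, map_sum, map_sum, smul_sum]
    refine sum_congr rfl fun k _ ↦ ?_
    rw [one_pow, mul_one, _root_.smul_pow, ← pow_mul, ← nsmul_eq_mul', ← cast_smul_eq_nsmul R,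
      smul_smul, map_smul, smul_comm, ← hd, Algebra.smul_def, ← map_mul]
  have hiff : ∀ n : ℕ, ∑ k ∈ range (n + 1), (n.choose k : R) * (p : R) ^ (2 * k) * d k = 0 ↔
      ψ ((1 + (p : R) ^ 2 • M) ^ n) = 0 := fun n ↦ by
    rw [← FaithfulSMul.algebraMap_eq_zero_iff R K, hexpand,
      smul_eq_zero_iff_right (nonZeroDivisors.ne_zero ha)]
  simp only [← hiff] at hinf ⊢
  exact sum_choose_mul_eq_zero_of_infinite hp hfin hinf n

end Hansel

section FiniteOrder

variable {R m : Type*} [CommRing R] [Fintype m] [DecidableEq m] {q : ℕ}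

theorem finite_adjoin_int_of_isIntegral (hq : q ≠ 0) (hq' : (q : R) = 0) {s : Set R}
    (hs : s.Finite) (hint : ∀ x ∈ s, IsIntegral ℤ x) : Finite (Algebra.adjoin ℤ s) := by
  have := Module.Finite.iff_fg.2 (fg_adjoin_of_finite hs hint)
  refine Module.finite_of_fg_torsion _ fun x ↦
    ⟨⟨q, mem_nonZeroDivisors_of_ne_zero (Int.natCast_ne_zero.2 hq)⟩, Subtype.ext ?_⟩
  simp [Submonoid.smul_def, hq']

theorem isOfFinOrder_of_forall_isIntegral (hq : q ≠ 0) (hq' : (q : R) = 0)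
    {A : Matrix m m R} (hA : ∀ i j, IsIntegral ℤ (A i j)) (hdet : IsUnit A.det) :
    IsOfFinOrder A := by
  let s : Set R := Set.range fun ij : m × m ↦ A ij.1 ij.2
  have : Finite (Algebra.adjoin ℤ s) := finite_adjoin_int_of_isIntegral hq hq'
    (Set.finite_range _) (Set.forall_mem_range.2 fun ij ↦ hA ij.1 ij.2)
  let B : Matrix m m (Algebra.adjoin ℤ s) :=
    .of fun i j ↦ ⟨A i j, Algebra.subset_adjoin ⟨(i, j), rfl⟩⟩
  have hBA : (Algebra.adjoin ℤ s).val.mapMatrix B = A := rfl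
  obtain ⟨u, hu⟩ := (Matrix.isUnit_iff_isUnit_det A).2 hdet
  rw [← hu, Units.isOfFinOrder_val]
  by_contra hcon
  refine not_injective_infinite_finite (B ^ · : ℕ → _) fun i j hij ↦
    injective_pow_iff_not_isOfFinOrder.2 hcon (Units.ext ?_)
  simpa only [map_pow, hBA, Units.val_pow_eq_pow_val, hu] using
    congrArg (Algebra.adjoin ℤ s).val.mapMatrix hij

theorem exists_pow_eq_one_add_smul (hq : q ≠ 0) {A : Matrix m m R}
    (hA : ∀ i j, IsIntegral ℤ (Ideal.Quotient.mk (Ideal.span {(q : R)}) (A i j)))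
    (hdet : IsUnit (Ideal.Quotient.mk (Ideal.span {(q : R)}) A.det)) :
    ∃ N > 0, ∃ M, A ^ N = 1 + (q : R) • M := by
  set π := Ideal.Quotient.mk (Ideal.span {(q : R)})
  have hπq : (q : R ⧸ Ideal.span {(q : R)}) = 0 := by
    rw [← map_natCast π, Ideal.Quotient.eq_zero_iff_mem]
    exact Ideal.mem_span_singleton_self _
  rw [RingHom.map_det] at hdet
  obtain ⟨N, hN, hpow⟩ := isOfFinOrder_iff_pow_eq_one.1 <|
    isOfFinOrder_of_forall_isIntegral (A := π.mapMatrix A) hq hπq hA hdet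
  have hdvd : ∀ i j, (q : R) ∣ (A ^ N - 1) i j := fun i j ↦ by
    rw [← Ideal.mem_span_singleton, ← Ideal.Quotient.eq_zero_iff_mem]
    change π.mapMatrix (A ^ N - 1) i j = 0
    simp only [map_sub, map_pow, map_one, hpow, sub_self, Matrix.zero_apply]
  choose M hM using hdvd
  exact ⟨N, hN, .of M, by rw [← sub_eq_iff_eq_add']; ext i j; exact hM i j⟩

end FiniteOrder

section Multiplicity

variable {R S : Type*} [CommRing R] [IsDomain R] [IsIntegrallyClosed R] [CommRing S] [IsDomain S]
  [Algebra R S] [FaithfulSMul R S] [Algebra.IsIntegral R S]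

theorem dvd_of_algebraMap_dvd_algebraMap {x y : R} (hx : x ≠ 0)
    (h : algebraMap R S x ∣ algebraMap R S y) : x ∣ y := by
  let := FractionRing.liftAlgebra R (FractionRing S)
  obtain ⟨s, hs⟩ := h
  have hx' : algebraMap R (FractionRing R) x ≠ 0 := by simpa using hx
  have hS : IsIntegral R (algebraMap S (FractionRing S) s) :=
    (Algebra.IsIntegral.isIntegral s).algebraMap
  have hdiv : algebraMap S (FractionRing S) s = algebraMap (FractionRing R) (FractionRing S)
      (algebraMap R (FractionRing R) y / algebraMap R (FractionRing R) x) := by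
    have hxS : algebraMap R (FractionRing S) x ≠ 0 := by
      rwa [Ne, FaithfulSMul.algebraMap_eq_zero_iff]
    rw [map_div₀, ← IsScalarTower.algebraMap_apply, ← IsScalarTower.algebraMap_apply,
      eq_div_iff hxS, IsScalarTower.algebraMap_apply R S (FractionRing S),
      IsScalarTower.algebraMap_apply R S (FractionRing S), hs, map_mul, mul_comm]
  rw [hdiv, isIntegral_algebraMap_iff (FaithfulSMul.algebraMap_injective _ _),
    IsIntegrallyClosed.isIntegral_iff] at hS
  obtain ⟨r, hr⟩ := hS
  rw [eq_div_iff hx', ← map_mul] at hr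
  exact Dvd.intro_left r (IsFractionRing.injective R (FractionRing R) hr)

theorem finiteMultiplicity_algebraMap [WfDvdMonoid R] {a : R} (ha₀ : a ≠ 0) (ha : ¬IsUnit a)
    {z : S} (hz : z ≠ 0) : FiniteMultiplicity (algebraMap R S a) z := by
  obtain ⟨r, hr, hzr⟩ :=
    (Algebra.IsAlgebraic.isAlgebraic (R := R) z).exists_nonzero_dvd
      (mem_nonZeroDivisors_of_ne_zero hz)
  obtain ⟨n, hn⟩ := FiniteMultiplicity.of_not_isUnit ha hr
  refine ⟨n, fun h ↦ hn (dvd_of_algebraMap_dvd_algebraMap (S := S) (pow_ne_zero _ ha₀) ?_)⟩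
  rw [map_pow]
  exact h.trans hzr

theorem finiteMultiplicity_natCast_integralClosure {K : Type*} [Field K] [Algebra R K]
    [FaithfulSMul R K] [WfDvdMonoid R] [CharZero R] {n : ℕ} (hn₀ : n ≠ 0) (hn : ¬IsUnit (n : R))
    {z : integralClosure R K} (hz : z ≠ 0) : FiniteMultiplicity (n : integralClosure R K) z := by
  rw [← map_natCast (algebraMap R (integralClosure R K))]
  exact finiteMultiplicity_algebraMap (Nat.cast_ne_zero.2 hn₀) hn hz

end Multiplicity

section AlgebraicIndependence

variable {ι K : Type*} [Field K] [CharZero K] {t : ι → K}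

open Polynomial in
theorem algebraicIndependent_sub_intCast_div (ht : AlgebraicIndependent ℤ t) (a : ι → ℤ) {q : ℕ}
    (hq : q ≠ 0) : AlgebraicIndependent ℤ fun i ↦ (t i - a i) / q := by
  have := IsLocalization.isAlgebraic ℚ (nonZeroDivisors ℤ)
  have hq' : (q : ℚ)⁻¹ ≠ 0 := inv_ne_zero (Nat.cast_ne_zero.2 hq)
  have htr (i) : Transcendental ℚ (C (q : ℚ)⁻¹ * (X - C (a i : ℚ))) :=
    transcendental _ (by rw [natDegree_C_mul hq', natDegree_X_sub_C]; exact one_ne_zero)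
      (mem_nonZeroDivisors_of_ne_zero <| by
        rwa [leadingCoeff_mul, leadingCoeff_C, leadingCoeff_X_sub_C, mul_one])
  convert ((ht.extendScalars ℚ).polynomial_aeval_of_transcendental htr).restrictScalars
    (RingHom.injective_int (algebraMap ℤ ℚ)) using 2 with i
  simp [div_eq_inv_mul]

variable (t) in
theorem adjoin_le_adjoin_sub_div (a : ι → ℤ) {q : ℕ} (hq : q ≠ 0) :
    Algebra.adjoin ℤ (Set.range t) ≤
      Algebra.adjoin ℤ (Set.range fun i ↦ (t i - a i) / (q : K)) := by
  refine Algebra.adjoin_le (Set.range_subset_iff.2 fun i ↦ ?_)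
  have hq' : (q : K) ≠ 0 := Nat.cast_ne_zero.2 hq
  rw [show t i = a i + q * ((t i - a i) / q) by field_simp; ring]
  exact add_mem (intCast_mem _ _) (mul_mem (natCast_mem _ _) (Algebra.subset_adjoin ⟨i, rfl⟩))

end AlgebraicIndependence

theorem exists_algHom_adjoin_ne_zero {R ι A : Type*} [CommRing R] [IsDomain R] [Infinite R]
    [CommRing A] [Algebra R A] {t : ι → A} (ht : AlgebraicIndependent R t)
    {b : Algebra.adjoin R (Set.range t)} (hb : b ≠ 0) :
    ∃ (a : ι → R) (ev : Algebra.adjoin R (Set.range t) →ₐ[R] R),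
      (∀ i, ev ⟨t i, Algebra.subset_adjoin ⟨i, rfl⟩⟩ = a i) ∧ ev b ≠ 0 := by
  obtain ⟨a, ha⟩ : ∃ a, MvPolynomial.eval a (ht.aevalEquiv.symm b) ≠ 0 := by
    by_contra! hzero
    exact hb ((EmbeddingLike.map_eq_zero_iff (f := ht.aevalEquiv.symm)).1 <|
      MvPolynomial.funext (q := 0) fun a ↦ by rw [hzero, map_zero])
  refine ⟨a, (MvPolynomial.aeval a).comp ht.aevalEquiv.symm.toAlgHom, fun i ↦ ?_,
    by simpa [MvPolynomial.aeval_eq_eval] using ha⟩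
  have hX : ht.aevalEquiv.symm ⟨t i, Algebra.subset_adjoin ⟨i, rfl⟩⟩ = MvPolynomial.X i := by
    rw [AlgEquiv.symm_apply_eq]
    ext
    simp
  simp [hX]

theorem isUnit_intCast_quotient_of_isCoprime {R : Type*} [CommRing R] {q : ℕ} {z : ℤ}
    (h : IsCoprime (q : ℤ) z) : IsUnit (z : R ⧸ Ideal.span {(q : R)}) := by
  have hcop := h.map (Int.castRingHom (R ⧸ Ideal.span {(q : R)}))
  rwa [eq_intCast, Int.cast_natCast, eq_intCast,
    ← map_natCast (Ideal.Quotient.mk (Ideal.span {(q : R)})),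
    Ideal.Quotient.eq_zero_iff_mem.2 (Ideal.mem_span_singleton_self _),
    isCoprime_zero_left] at hcop

section SpecializationRing

open Algebra Set

variable {ι K : Type*} [Field K]

/-- The integral closure in `K` of `ℤ[(t i - a i) / q]`. It contains `ℤ[t]`, and in it each `t i` is
congruent to the integer `a i` modulo `q`. -/
def specializationRing (t : ι → K) (a : ι → ℤ) (q : ℕ) : Subring K :=
  (integralClosure (adjoin ℤ (range fun i ↦ (t i - a i) / (q : K))) K).toSubring

namespace specializationRing
variable [CharZero K] {t : ι → K} {a : ι → ℤ} {q : ℕ}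

theorem mem_of_isIntegral (hq : q ≠ 0) {z : K} (hz : IsIntegral (adjoin ℤ (range t)) z) :
    z ∈ specializationRing t a q :=
  hz.map_of_comp_eq (Subalgebra.inclusion (adjoin_le_adjoin_sub_div t a hq)).toRingHom
    (RingHom.id K) rfl

theorem isFractionRing (ht : IsTranscendenceBasis ℤ t) (hq : q ≠ 0) :
    IsFractionRing (specializationRing t a q) K := by
  have : Algebra.IsAlgebraic (adjoin ℤ (range fun i ↦ (t i - a i) / (q : K))) K := ⟨fun z ↦
    (ht.isAlgebraic.isAlgebraic z).tower_top_of_subalgebra_le (adjoin_le_adjoin_sub_div t a hq)⟩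
  exact integralClosure.isFractionRing_of_algebraic
    ((injective_iff_map_eq_zero _).1 Subtype.val_injective)

theorem finiteMultiplicity (ht : AlgebraicIndependent ℤ t) (hq : q ≠ 0) {p : ℕ} (hp : p.Prime)
    {z : specializationRing t a q} (hz : z ≠ 0) :
    FiniteMultiplicity (p : specializationRing t a q) z := by
  have ht' := algebraicIndependent_sub_intCast_div ht a hq
  have : UniqueFactorizationMonoid (adjoin ℤ (range fun i ↦ (t i - a i) / (q : K))) :=
    ht'.aevalEquiv.toMulEquiv.uniqueFactorizationMonoid inferInstance
  refine finiteMultiplicity_natCast_integralClosure hp.ne_zero (fun h ↦ ?_) hz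
  have h' := h.map ((MvPolynomial.aeval (0 : ι → ℤ)).comp ht'.aevalEquiv.symm.toAlgHom)
  rw [map_natCast] at h'
  exact (Nat.prime_iff_prime_int.1 hp).not_isUnit h'

/-- The inclusion of `ℤ[t]` into `specializationRing t a q`; composed with reduction modulo `q` it
is the specialization of `t` at `a`. -/
def ofAdjoin (t : ι → K) (a : ι → ℤ) (hq : q ≠ 0) :
    adjoin ℤ (range t) →+* specializationRing t a q :=
  (adjoin ℤ (range t)).val.toRingHom.codRestrict _ fun _ ↦
    mem_of_isIntegral hq isIntegral_algebraMap

theorem mk_comp_ofAdjoin (hq : q ≠ 0) {ev : adjoin ℤ (range t) →ₐ[ℤ] ℤ}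
    (hev : ∀ i, ev ⟨t i, subset_adjoin ⟨i, rfl⟩⟩ = a i) :
    (Ideal.Quotient.mk (Ideal.span {(q : specializationRing t a q)})).comp (ofAdjoin t a hq) =
      (Int.castRingHom _).comp (ev : adjoin ℤ (range t) →+* ℤ) := by
  set π := Ideal.Quotient.mk (Ideal.span {(q : specializationRing t a q)})
  suffices (π.comp (ofAdjoin t a hq)).toIntAlgHom = (Algebra.ofId ℤ _).comp ev from
    RingHom.ext fun b ↦ DFunLike.congr_fun this b
  refine AlgHom.adjoin_ext ?_
  rintro _ ⟨i, rfl⟩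
  let s : specializationRing t a q := ⟨(t i - a i) / q, isIntegral_algebraMap
    (R := adjoin ℤ (range fun i ↦ (t i - a i) / (q : K))) (x := ⟨_, subset_adjoin ⟨i, rfl⟩⟩)⟩
  have hs : ofAdjoin t a hq ⟨t i, subset_adjoin ⟨i, rfl⟩⟩ = a i + q * s := by
    have hq' : (q : K) ≠ 0 := Nat.cast_ne_zero.2 hq
    refine Subtype.ext ?_
    change t i = a i + q * ((t i - a i) / q)
    field_simp
    ring
  change π (ofAdjoin t a hq ⟨t i, subset_adjoin ⟨i, rfl⟩⟩) = (ev ⟨t i, subset_adjoin ⟨i, rfl⟩⟩ : ℤ)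
  rw [hs, hev, map_add, map_mul, map_intCast,
    Ideal.Quotient.eq_zero_iff_mem.2 (Ideal.mem_span_singleton_self _), zero_mul, add_zero]

theorem isIntegral_mk (hq : q ≠ 0) {ev : adjoin ℤ (range t) →ₐ[ℤ] ℤ}
    (hev : ∀ i, ev ⟨t i, subset_adjoin ⟨i, rfl⟩⟩ = a i) {z : specializationRing t a q}
    (hz : IsIntegral (adjoin ℤ (range t)) (z : K)) :
    IsIntegral ℤ (Ideal.Quotient.mk (Ideal.span {(q : specializationRing t a q)}) z) := by
  let := (ofAdjoin t a hq).toAlgebra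
  have : IsScalarTower (adjoin ℤ (range t)) (specializationRing t a q) K :=
    .of_algebraMap_eq fun _ ↦ rfl
  exact ((isIntegral_algebraMap_iff Subtype.val_injective).1 hz).map_of_comp_eq
    (ev : adjoin ℤ (range t) →+* ℤ) _ (mk_comp_ofAdjoin hq hev).symm

end specializationRing

open specializationRing in
theorem exists_subring_isIntegral_mk [CharZero K] {κ : Type*} [Finite κ] (x : κ → K) :
    ∃ (R : Subring K) (p : ℕ), p.Prime ∧ IsFractionRing R K ∧
      (∀ z : R, z ≠ 0 → FiniteMultiplicity (p : R) z) ∧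
      ∃ c : R, c ≠ 0 ∧ IsUnit (Ideal.Quotient.mk (Ideal.span {((p ^ 2 : ℕ) : R)}) c) ∧
        ∀ i, ∃ y : R, (y : K) = c * x i ∧
          IsIntegral ℤ (Ideal.Quotient.mk (Ideal.span {((p ^ 2 : ℕ) : R)}) y) := by
  obtain ⟨ι, t, ht⟩ := exists_isTranscendenceBasis' ℤ K
  have := ht.isAlgebraic
  classical
  obtain ⟨b, hb, hbx⟩ := Algebra.IsAlgebraic.exists_integral_multiples
    (adjoin ℤ (range t)) (finite_range x).toFinset
  obtain ⟨a, ev, hev, hevb⟩ := exists_algHom_adjoin_ne_zero ht.1 hb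
  -- `p` is prime to the value at `a` of the common denominator `b`, which thus becomes a unit.
  obtain ⟨p, hple, hp⟩ := Nat.exists_infinite_primes ((ev b).natAbs + 1)
  have hq : p ^ 2 ≠ 0 := pow_ne_zero 2 hp.ne_zero
  refine ⟨specializationRing t a (p ^ 2), p, hp, isFractionRing ht hq,
    fun z ↦ finiteMultiplicity ht.1 hq hp, ofAdjoin t a hq b, ?_, ?_, fun i ↦ ?_⟩
  · exact fun h ↦ hb (Subtype.ext (congrArg (Subring.subtype _) h))
  · rw [← RingHom.comp_apply, mk_comp_ofAdjoin hq hev]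
    have hcop : IsCoprime ((p ^ 2 : ℕ) : ℤ) (ev b) := by
      rw [Int.isCoprime_iff_gcd_eq_one, Int.gcd, Int.natAbs_natCast]
      exact (Nat.coprime_of_lt_prime (Int.natAbs_pos.2 hevb).ne' hple hp).pow_left 2
    exact isUnit_intCast_quotient_of_isCoprime hcop
  · have hint : IsIntegral (adjoin ℤ (range t)) ((b : K) * x i) :=
      hbx _ ((finite_range x).mem_toFinset.2 ⟨i, rfl⟩)
    exact ⟨⟨_, mem_of_isIntegral hq hint⟩, rfl, isIntegral_mk hq hev hint⟩

end SpecializationRing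

section MatrixPowers

open Module
variable {K m : Type*} [Field K] [CharZero K] [Fintype m] [DecidableEq m]

theorem exists_subring_smul_pow_eq_mapMatrix_one_add_smul {A : Matrix m m K} (hA : A.det ≠ 0) :
    ∃ (R : Subring K) (p : ℕ), p.Prime ∧ IsFractionRing R K ∧
      (∀ z : R, z ≠ 0 → FiniteMultiplicity (p : R) z) ∧ ∃ c : K, c ≠ 0 ∧ ∃ N > 0,
        ∃ M : Matrix m m R, (c • A) ^ N = R.subtype.mapMatrix (1 + (p : R) ^ 2 • M) := by
  obtain ⟨R, p, hp, hR, hfin, c, hc, hcu, hint⟩ :=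
    exists_subring_isIntegral_mk fun o : Option (m × m) ↦ o.elim A.det⁻¹ fun ij ↦ A ij.1 ij.2
  choose y hy hyint using hint
  let B : Matrix m m R := .of fun i j ↦ y (some (i, j))
  have hBA : R.subtype.mapMatrix B = (c : K) • A := by
    ext i j
    exact hy (some (i, j))
  have hdet : B.det * y none = c ^ (Fintype.card m + 1) := by
    refine Subtype.ext ?_
    change R.subtype B.det * y none = ((c ^ (Fintype.card m + 1) : R) : K)
    rw [RingHom.map_det, hBA, Matrix.det_smul, hy, Option.elim_none, SubmonoidClass.coe_pow,
      pow_succ, mul_mul_mul_comm, mul_inv_cancel₀ hA, mul_one]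
  have hBu : IsUnit (Ideal.Quotient.mk (Ideal.span {((p ^ 2 : ℕ) : R)}) B.det) :=
    isUnit_of_mul_isUnit_left (by rw [← map_mul, hdet, map_pow]; exact hcu.pow _)
  obtain ⟨N, hN, M, hM⟩ := exists_pow_eq_one_add_smul (A := B) (pow_ne_zero 2 hp.ne_zero)
    (fun i j ↦ hyint (some (i, j))) hBu
  refine ⟨R, p, hp, hR, hfin, c, fun h ↦ hc (Subtype.ext h), N, hN, M, ?_⟩
  rw [← hBA, ← map_pow, hM, Nat.cast_pow]

theorem exists_pow_forall_dual_apply_eq_zero {A : Matrix m m K} (hA : A.det ≠ 0) :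
    ∃ N > 0, ∀ φ : Dual K (Matrix m m K), {n : ℕ | φ ((A ^ N) ^ n) = 0}.Infinite →
      ∀ n, φ ((A ^ N) ^ n) = 0 := by
  obtain ⟨R, p, hp, hR, hfin, c, hc, N, hN, M, hM⟩ :=
    exists_subring_smul_pow_eq_mapMatrix_one_add_smul hA
  refine ⟨N, hN, fun φ hinf n ↦ ?_⟩
  let ψ : Matrix m m R →ₗ[R] K :=
    φ.restrictScalars R ∘ₗ (Algebra.ofId R K).mapMatrix.toLinearMap
  have hψ : ∀ n, ψ ((1 + (p : R) ^ 2 • M) ^ n) = c ^ (N * n) * φ ((A ^ N) ^ n) := fun n ↦ by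
    change φ (R.subtype.mapMatrix ((1 + (p : R) ^ 2 • M) ^ n)) = _
    rw [map_pow, ← hM, smul_pow, smul_pow, ← pow_mul, map_smul, smul_eq_mul]
  have hiff : ∀ n, ψ ((1 + (p : R) ^ 2 • M) ^ n) = 0 ↔ φ ((A ^ N) ^ n) = 0 := fun n ↦ by
    rw [hψ, mul_eq_zero_iff_left (pow_ne_zero _ hc)]
  simp only [← hiff] at hinf ⊢
  exact map_one_add_smul_pow_eq_zero_of_infinite hp hfin ψ M hinf n

end MatrixPowers

section ReturnRigid

open Module
section Module

variable {R V : Type*} [Semiring R] [AddCommMonoid V] [Module R V]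

/-- A linear automorphism `g` is return-rigid if every forward orbit of `g` meeting a subspace
infinitely often lies in it: the Skolem-Mahler-Lech theorem without exceptional residue classes. -/
def ReturnRigid (g : V ≃ₗ[R] V) : Prop :=
  ∀ (W : Submodule R V) (v : V), {n : ℕ | (g ^ n) v ∈ W}.Infinite → ∀ n : ℕ, (g ^ n) v ∈ W

namespace ReturnRigid
variable {g : V ≃ₗ[R] V} {W : Submodule R V} {v : V}

theorem pow (hg : ReturnRigid g) {N : ℕ} (hN : N ≠ 0) : ReturnRigid (g ^ N) := by
  intro W v hinf n
  simp only [← pow_mul] at hinf ⊢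
  refine hg W v ((hinf.image (mul_right_injective₀ hN).injOn).mono ?_) _
  exact Set.image_subset_iff.2 fun _ h ↦ h

theorem zpow_mem (hg : ReturnRigid g) (hinf : {n : ℕ | (g ^ n) v ∈ W}.Infinite) :
    ∀ n : ℤ, (g ^ n) v ∈ W
  | .ofNat n => hg W v hinf n
  | .negSucc k => by
    refine hg W ((g ^ Int.negSucc k) v) ?_ 0
    refine (hinf.image (add_left_injective (k + 1)).injOn).mono (Set.image_subset_iff.2 ?_)
    intro n hn
    have hcancel : g ^ (n + (k + 1)) * g ^ Int.negSucc k = g ^ n := by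
      rw [pow_add, zpow_negSucc, mul_inv_cancel_right]
    rwa [Set.mem_preimage, Set.mem_ofPred_eq, ← LinearEquiv.mul_apply, hcancel]

theorem zpow_mem_of_infinite_int (hg : ReturnRigid g) (hg' : ReturnRigid g⁻¹)
    (hinf : {n : ℤ | (g ^ n) v ∈ W}.Infinite) (n : ℤ) : (g ^ n) v ∈ W := by
  have hsplit : {n : ℤ | (g ^ n) v ∈ W} ⊆ Nat.cast '' {n : ℕ | (g ^ n) v ∈ W} ∪
      (fun n : ℕ ↦ -(n : ℤ)) '' {n : ℕ | (g⁻¹ ^ n) v ∈ W} := fun n hn ↦ by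
    obtain ⟨k, rfl | rfl⟩ := n.eq_nat_or_neg
    · exact .inl ⟨k, by simpa using hn, rfl⟩
    · exact .inr ⟨k, by simpa using hn, rfl⟩
  rcases Set.infinite_union.1 (hinf.mono hsplit) with h | h
  · exact hg.zpow_mem h.of_image n
  · simpa using hg'.zpow_mem h.of_image (-n)

end ReturnRigid

end Module

variable {K V : Type*} [Field K] [AddCommGroup V] [Module K V] [FiniteDimensional K V]

theorem exists_pow_returnRigid [CharZero K] (g : V ≃ₗ[K] V) : ∃ N ≠ 0, ReturnRigid (g ^ N) := by
  let e := LinearMap.toMatrixAlgEquiv (finBasis K V)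
  let toEnd := LinearEquiv.automorphismGroup.toLinearMapMonoidHom (R := K) (M := V)
  have hdet : (e (toEnd g)).det ≠ 0 :=
    ((Matrix.isUnit_iff_isUnit_det _).1 (((Group.isUnit g).map toEnd).map e)).ne_zero
  obtain ⟨N, hN, h⟩ := exists_pow_forall_dual_apply_eq_zero hdet
  refine ⟨N, hN.ne', fun W v hinf n ↦ ?_⟩
  have hpow : ∀ n, e.symm ((e (toEnd g) ^ N) ^ n) v = ((g ^ N) ^ n) v := fun n ↦ by
    rw [← map_pow, ← map_pow, AlgEquiv.symm_apply_apply, ← map_pow, ← map_pow]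
    rfl
  refine (Subspace.forall_mem_dualAnnihilator_apply_eq_zero_iff W _).1 fun f hf ↦ ?_
  rw [← hpow]
  refine h (f ∘ₗ LinearMap.applyₗ v ∘ₗ e.symm.toLinearMap) (hinf.mono fun n hn ↦ ?_) n
  exact (congrArg f (hpow n)).trans ((Submodule.mem_dualAnnihilator f).1 hf _ hn)

theorem exists_zpow_apply_zpow_mem [CharZero K] (g : V ≃ₗ[K] V) :
    ∃ N ≠ 0, ∀ (W : Submodule K V) (v : V), {n : ℤ | (g ^ n) v ∈ W}.Infinite →
      ∃ r : ℤ, ∀ n : ℤ, (g ^ r) (((g ^ N) ^ n) v) ∈ W := by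
  obtain ⟨N₁, hN₁, h₁⟩ := exists_pow_returnRigid g
  obtain ⟨N₂, hN₂, h₂⟩ := exists_pow_returnRigid g⁻¹
  have hpos : ReturnRigid (g ^ (N₁ * N₂)) := pow_mul g N₁ N₂ ▸ h₁.pow hN₂
  have hneg : ReturnRigid (g ^ (N₁ * N₂))⁻¹ := by
    rw [← inv_pow, mul_comm, pow_mul]
    exact h₂.pow hN₁
  refine ⟨N₁ * N₂, mul_ne_zero hN₁ hN₂, fun W v hinf ↦ ?_⟩
  set N := N₁ * N₂
  have hN : (0 : ℤ) < N := by positivity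
  have hcover : {n : ℤ | (g ^ n) v ∈ W} ⊆ ⋃ r ∈ Set.Ico (0 : ℤ) N,
      (r + N * ·) '' {n : ℤ | (g ^ r) (((g ^ N) ^ n) v) ∈ W} := fun n hn ↦ by
    have hn' : g ^ (n % N) * (g ^ N) ^ (n / N) = g ^ n := by
      rw [← zpow_natCast, ← zpow_mul, ← zpow_add, Int.emod_add_mul_ediv]
    refine Set.mem_biUnion ⟨n.emod_nonneg hN.ne', n.emod_lt_of_pos hN⟩
      ⟨n / N, ?_, Int.emod_add_mul_ediv n N⟩
    rwa [Set.mem_ofPred_eq, ← LinearEquiv.mul_apply, hn']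
  obtain ⟨r, hr⟩ : ∃ r : ℤ, {n : ℤ | (g ^ r) (((g ^ N) ^ n) v) ∈ W}.Infinite := by
    by_contra! hfin
    exact hinf (((Set.finite_Ico _ _).biUnion fun r _ ↦ (hfin r).image _).subset hcover)
  exact ⟨r, hpos.zpow_mem_of_infinite_int (W := W.comap (g ^ r).toLinearMap) hneg hr⟩

end ReturnRigid

theorem finite_setOf_eq_zpow_smul {G X : Type*} [Group G] [MulAction G X] {g : G} {x : X} {N : ℕ}
    (hN : N ≠ 0) (h : g ^ N • x = x) : {y | ∃ n : ℤ, y = g ^ n • x}.Finite := by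
  have hpos : 0 < MulAction.period g x := MulAction.period_pos_of_fixed (Nat.pos_of_ne_zero hN) h
  refine ((Set.finite_Ico (0 : ℤ) (MulAction.period g x)).image (g ^ · • x)).subset ?_
  rintro _ ⟨n, rfl⟩
  exact ⟨n % MulAction.period g x, ⟨n.emod_nonneg (by lia), n.emod_lt_of_pos (by lia)⟩,
    MulAction.zpow_mod_period_smul n⟩

section Projective

open Module
open scoped Pointwise LinearAlgebra.Projectivization
variable {K V : Type*} [DivisionRing K] [AddCommGroup V] [Module K V]

theorem projectivization_submodule_smul (g : V ≃ₗ[K] V) (P : ℙ K V) :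
    (g • P).submodule = g • P.submodule := by
  induction P with | h v hv
  rw [smul_mk, submodule_mk, submodule_mk, Submodule.smul_span, Set.smul_set_singleton]

/-- The linear span of the points `g ^ n • P`, `n : ℤ`, of a projective orbit. -/
def orbitSpan (g : V ≃ₗ[K] V) (P : ℙ K V) : Submodule K V :=
  ⨆ n : ℤ, (g ^ n • P).submodule

theorem smul_orbitSpan (g : V ≃ₗ[K] V) (P : ℙ K V) : g • orbitSpan g P = orbitSpan g P := by
  calc
    g • orbitSpan g P = ⨆ n : ℤ, g • (g ^ n • P).submodule := Submodule.map_iSup _ _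
    _ = ⨆ n : ℤ, (g ^ (n + 1) • P).submodule := by
      simp only [← projectivization_submodule_smul, smul_smul, mul_self_zpow]
    _ = orbitSpan g P := (Equiv.addRight (1 : ℤ)).iSup_comp (g := fun n ↦ (g ^ n • P).submodule)

theorem two_le_finrank_orbitSpan [FiniteDimensional K V] {g : V ≃ₗ[K] V} {P : ℙ K V}
    (hP : g • P ≠ P) : 2 ≤ finrank K (orbitSpan g P) := by
  by_contra! hlt
  have heq (n : ℤ) : (g ^ n • P).submodule = orbitSpan g P :=
    Submodule.eq_of_le_of_finrank_le (le_iSup (fun n : ℤ ↦ (g ^ n • P).submodule) n)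
      (by rw [finrank_submodule]; lia)
  exact hP (submodule_injective (by simpa using (heq 1).trans (heq 0).symm))

end Projective

section Lines

open Module
open scoped Pointwise LinearAlgebra.Projectivization
variable {K V : Type*} [Field K] [AddCommGroup V] [Module K V] [FiniteDimensional K V]

theorem exists_zpow_smul_orbitSpan_le [CharZero K] (g : V ≃ₗ[K] V) :
    ∃ N ≠ 0, ∀ (P : ℙ K V) (W : Submodule K V),
      {Q | (∃ n : ℤ, Q = g ^ n • P) ∧ Q.submodule ≤ W}.Infinite →
        ∃ r : ℤ, g ^ r • orbitSpan (g ^ N) P ≤ W := by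
  obtain ⟨N, hN, h⟩ := exists_zpow_apply_zpow_mem g
  refine ⟨N, hN, fun P W hinf ↦ ?_⟩
  induction P with | h v hv
  have hmem (f : V ≃ₗ[K] V) : (f • mk K v hv).submodule ≤ W ↔ f v ∈ W := by
    rw [smul_mk, submodule_mk, Submodule.span_singleton_le_iff_mem, LinearEquiv.smul_def]
  obtain ⟨r, hr⟩ := h W v <| Set.Infinite.of_image (g ^ · • mk K v hv) <| hinf.mono <| by
    rintro _ ⟨⟨n, rfl⟩, hn⟩
    exact ⟨n, (hmem _).1 hn, rfl⟩
  refine ⟨r, (Submodule.map_iSup _ _).trans_le (iSup_le fun n ↦ ?_)⟩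
  change g ^ r • ((g ^ N) ^ n • mk K v hv).submodule ≤ W
  rw [← projectivization_submodule_smul, smul_smul, hmem]
  exact hr n

theorem orbit_on_line_classification_general [CharZero K] {β : V ≃ₗ[K] V} {P : ℙ K V}
    {L : Submodule K V} (hL : finrank K L = 2)
    (hinf : {Q | (∃ n : ℤ, Q = β ^ n • P) ∧ Q.submodule ≤ L}.Infinite) :
    {M | ∃ n : ℤ, M = β ^ n • L}.Finite ∧
      ∀ M : Submodule K V, finrank K M = 2 → (∀ n : ℤ, β ^ n • L ≠ M) →
        {Q | (∃ n : ℤ, Q = β ^ n • P) ∧ Q.submodule ≤ M}.Finite := by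
  obtain ⟨N, hN, h⟩ := exists_zpow_smul_orbitSpan_le β
  set U := orbitSpan (β ^ N) P
  have hU : 2 ≤ finrank K U := two_le_finrank_orbitSpan fun hfix ↦
    hinf ((finite_setOf_eq_zpow_smul hN hfix).subset fun _ hQ ↦ hQ.1)
  have htranslate (M : Submodule K V) (hM : finrank K M = 2)
      (hMinf : {Q | (∃ n : ℤ, Q = β ^ n • P) ∧ Q.submodule ≤ M}.Infinite) :
      ∃ r : ℤ, β ^ r • U = M := by
    obtain ⟨r, hr⟩ := h P M hMinf
    refine ⟨r, Submodule.eq_of_le_of_finrank_le hr ?_⟩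
    rw [hM]
    exact hU.trans_eq (LinearEquiv.finrank_map_eq (β ^ r) U).symm
  obtain ⟨r, rfl⟩ := htranslate L hL hinf
  refine ⟨finite_setOf_eq_zpow_smul hN ?_, fun M hM hne ↦ Set.not_infinite.1 fun hMinf ↦ ?_⟩
  · rw [smul_smul, (Commute.pow_left (Commute.self_zpow β r) N).eq, ← smul_smul, smul_orbitSpan]
  · obtain ⟨s, rfl⟩ := htranslate M hM hMinf
    exact hne (s - r) (by rw [smul_smul, ← zpow_add, sub_add_cancel])

end Lines

/-- If infinitely many points of the `β`-orbit of `P ∈ L₁` lie on `L₁`, and the orbit of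
`P` meets both `L₂` and `L₃` (the three lines lying in pairwise distinct `β`-orbits),
then the `β`-orbit of the line `L₁` is finite, and only finitely many points of the
orbit of `P` lie on `L₂ ∪ L₃`. -/
theorem orbit_on_line_classification (β : (Fin 3 → ℂ) ≃ₗ[ℂ] (Fin 3 → ℂ))
    (W : Fin 3 → Submodule ℂ (Fin 3 → ℂ))
    (hrank : ∀ i, Module.finrank ℂ (W i) = 2)
    (horb : ∀ (k : ℤ) (i j : Fin 3), i ≠ j →
      Submodule.map (β ^ k).toLinearMap (W i) ≠ W j)
    (P : ProjPlane) (hP : OnLine P (W 0))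
    (hinf : {Q : ProjPlane | (∃ n : ℤ, Q = projAct (β ^ n) P) ∧ OnLine Q (W 0)}.Infinite)
    (hm : ∃ m : ℤ, OnLine (projAct (β ^ m) P) (W 1))
    (hk : ∃ k : ℤ, OnLine (projAct (β ^ k) P) (W 2)) :
    {M : Submodule ℂ (Fin 3 → ℂ) |
        ∃ n : ℤ, M = Submodule.map (β ^ n).toLinearMap (W 0)}.Finite ∧
    {Q : ProjPlane | (∃ n : ℤ, Q = projAct (β ^ n) P) ∧
        (OnLine Q (W 1) ∨ OnLine Q (W 2))}.Finite := by
  obtain ⟨horbit, hfin⟩ := orbit_on_line_classification_general (hrank 0) hinf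
  have hfin' (j : Fin 3) (hj : 0 ≠ j) := hfin (W j) (hrank j) fun n ↦ horb n 0 j hj
  refine ⟨horbit, ((hfin' 1 (by decide)).union (hfin' 2 (by decide))).subset ?_⟩
  rintro Q ⟨hQ, h | h⟩
  exacts [.inl ⟨hQ, h⟩, .inr ⟨hQ, h⟩]
end
end

section
/- Let 0 < c < 1, fix s ∈ ℝ and an integer n ≥ 2. Let (x_k)_{k∈ℤ} and (y_k)_{k∈ℤ} be two n-periodic billiard trajectories on the ellipse C whose segments are all tangent to the caustic C_s; precisely: x_{k+n} = x_k, x_k ∈ C and x_{k+1} ≠ x_k for all k; setting w_k = (x_{k+1} − x_k)/‖x_{k+1} − x_k‖, the reflection law w_k = w_{k−1} − 2⟨w_{k−1}, ν(x_k)⟩·ν(x_k) holds for all k; and for every k there exist t_k, u_k ∈ ℝ with s·t_k² + (s − c²)·u_k² = 1 such that t_k·X + u_k·Y = 1 holds for both (X,Y) = x_k and (X,Y) = x_{k+1}; and the same conditions hold for (y_k), with unit directions w′_k and the same value of s. Then ∑_{k=0}^{n−1} ⟨w_k, w_{k+1}⟩ = ∑_{k=0}^{n−1} ⟨w′_k,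 w′_{k+1}⟩; that is, the sum of the cosines of the angles between consecutive segments of a periodic billiard trajectory of period n depends only on the caustic, and not on the trajectory. -/
noncomputable section

/-- The Euclidean inner product on `ℝ × ℝ`. -/
def ip (v w : ℝ × ℝ) : ℝ := v.1 * w.1 + v.2 * w.2

/-- The Euclidean norm on `ℝ × ℝ`. -/
def nrm (v : ℝ × ℝ) : ℝ := Real.sqrt (ip v v)

/-- The boundary ellipse `C = {(x,y) : x² + y²/(1−c²) = 1}`. -/
def ellipseC (c : ℝ) : Set (ℝ × ℝ) := {q | q.1 ^ 2 + q.2 ^ 2 / (1 - c ^ 2) = 1}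

/-- The outward unit normal to `C` at `q`. -/
def nuC (c : ℝ) (q : ℝ × ℝ) : ℝ × ℝ :=
  (nrm (q.1, q.2 / (1 - c ^ 2)))⁻¹ • (q.1, q.2 / (1 - c ^ 2))

/-- The unit direction of the `k`-th segment of a (two-sided) trajectory. -/
def dirZ (x : ℤ → ℝ × ℝ) (k : ℤ) : ℝ × ℝ :=
  (nrm (x (k + 1) - x k))⁻¹ • (x (k + 1) - x k)

/-- `x` is an `n`-periodic billiard trajectory on the ellipse `C`, all of whose segments
are tangent to the caustic `C_s : x²/s + y²/(s−c²) = 1` (a line `tX + uY = 1` being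
tangent to `C_s` exactly when `st² + (s−c²)u² = 1`). -/
def IsPeriodicCausticTraj (c s : ℝ) (n : ℕ) (x : ℤ → ℝ × ℝ) : Prop :=
  (∀ k : ℤ, x (k + n) = x k) ∧
  (∀ k : ℤ, x k ∈ ellipseC c) ∧
  (∀ k : ℤ, x (k + 1) ≠ x k) ∧
  (∀ k : ℤ, dirZ x k =
    dirZ x (k - 1) - (2 * ip (dirZ x (k - 1)) (nuC c (x k))) • nuC c (x k)) ∧
  (∀ k : ℤ, ∃ t u : ℝ, s * t ^ 2 + (s - c ^ 2) * u ^ 2 = 1 ∧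
    t * (x k).1 + u * (x k).2 = 1 ∧ t * (x (k + 1)).1 + u * (x (k + 1)).2 = 1)

/-!
The common caustic fixes Joachimsthal's constant `J`, which is the same for all segments of the
two trajectories `x` and `y`. The cosine at a vertex is `1 - J * turn`, where the turn is the
coefficient of the normal in the change of direction, so the turns must have equal sums.

Let `O k` be the pole of the chord joining `x k` to `y k`. It has opposite signed distances to the
`k`-th segments of `x` and `y`, as does `O (k + 1)`. Hence `O k - O (k + 1)` is parallel to the sum
of the two unit directions and orthogonal to their difference `d k`, so `⟨O k, d k⟩ =
⟨O (k + 1), d k⟩`. As `O (k + 1)` lies on the tangents at both `x (k + 1)` and `y (k + 1)`, the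
difference of the turns is `⟨O (k + 1), d k - d (k + 1)⟩ = ⟨O k, d k⟩ - ⟨O (k + 1), d (k + 1)⟩`,
which telescopes over a period. Where a pole is at infinity, the two trajectories are locally
images of each other under the central symmetry, up to reversal of time.
-/

section PlaneVectors

/-- The two-dimensional cross product, i.e. the determinant with columns `p` and `q`. -/
def cross (p q : ℝ × ℝ) : ℝ := p.1 * q.2 - p.2 * q.1

lemma ip_self_pos {p : ℝ × ℝ} (hp : p ≠ 0) : 0 < ip p p := by
  rw [ne_eq, Prod.ext_iff, not_and_or] at hp
  rcases hp with h | h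
  · exact add_pos_of_pos_of_nonneg (mul_self_pos.2 h) (mul_self_nonneg _)
  · exact add_pos_of_nonneg_of_pos (mul_self_nonneg _) (mul_self_pos.2 h)

lemma ip_eq_zero_of_cross_eq_zero {a p q : ℝ × ℝ} (ha : a ≠ 0) (hp : cross a p = 0)
    (hq : ip q a = 0) : ip p q = 0 := by
  have lagrange : ip a a * ip p q = ip p a * ip q a + cross a p * cross a q := by
    simp only [ip, cross]; ring
  rw [hp, hq, mul_zero, zero_mul, add_zero] at lagrange
  exact (mul_eq_zero.1 lagrange).resolve_left (ip_self_pos ha).ne'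

lemma eq_zero_or_eq_zero_of_ip_eq_zero {a p q : ℝ × ℝ} (ha : a ≠ 0) (hp : ip p a = 0)
    (hq : ip q a = 0) (hpq : ip p q = 0) : p = 0 ∨ q = 0 := by
  by_contra! h
  have hcross : cross p q = 0 := by
    have split : ip a a * cross p q = ip q a * cross p a - ip p a * cross q a := by
      simp only [ip, cross]; ring
    rw [hp, hq, zero_mul, zero_mul, sub_zero] at split
    exact (mul_eq_zero.1 split).resolve_left (ip_self_pos ha).ne'
  have hqq : ip q q = 0 :=
    ip_eq_zero_of_cross_eq_zero h.1 hcross (by simpa only [ip, mul_comm] using hpq)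
  exact (ip_self_pos h.2).ne' hqq

/-- Two unit vectors with the same component along `a` coincide or are mirror images in the
axis spanned by `a`; the mirror image of `w'` is `-w` when `w - w'` is a multiple of `a`. -/
lemma eq_neg_or_eq_of_ip_eq {a u w w' : ℝ × ℝ} {μ : ℝ} (ha : a ≠ 0) (hu : ip u u = 1)
    (hw' : ip w' w' = 1) (hreflect : w' = w - μ • a) (hneg : ip w' a = -ip w a)
    (hua : ip u a = ip w' a) : u = -w ∨ u = w' := by
  obtain rfl : w = w' + μ • a := by rw [hreflect, sub_add_cancel]
  have horth : ip (u + (w' + μ • a)) (u - w') = 0 := by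
    simp only [ip, Prod.fst_add, Prod.snd_add, Prod.fst_sub, Prod.snd_sub, Prod.smul_fst,
      Prod.smul_snd, smul_eq_mul] at *
    linear_combination hu - hw' + μ * hua
  refine (eq_zero_or_eq_zero_of_ip_eq_zero ha ?_ ?_ horth).imp eq_neg_of_add_eq_zero_left
    eq_of_sub_eq_zero
  · simp only [ip, Prod.fst_add, Prod.snd_add] at *
    linear_combination hua + hneg
  · simp only [ip, Prod.fst_sub, Prod.snd_sub] at *
    linear_combination hua

lemma nrm_sq (p : ℝ × ℝ) : nrm p ^ 2 = ip p p :=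
  Real.sq_sqrt (add_nonneg (mul_self_nonneg _) (mul_self_nonneg _))

lemma nrm_pos {p : ℝ × ℝ} (hp : p ≠ 0) : 0 < nrm p :=
  Real.sqrt_pos.2 (ip_self_pos hp)

lemma ip_dirZ_self {x : ℤ → ℝ × ℝ} {k : ℤ} (h : x (k + 1) ≠ x k) :
    ip (dirZ x k) (dirZ x k) = 1 := by
  have hpos := nrm_pos (sub_ne_zero.2 h)
  have hsq := nrm_sq (x (k + 1) - x k)
  simp only [ip, dirZ, Prod.smul_fst, Prod.smul_snd, smul_eq_mul] at hsq ⊢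
  field_simp
  linarith

lemma add_nrm_smul_dirZ {x : ℤ → ℝ × ℝ} {k : ℤ} (h : x (k + 1) ≠ x k) :
    x k + nrm (x (k + 1) - x k) • dirZ x k = x (k + 1) := by
  rw [dirZ, smul_inv_smul₀ (nrm_pos (sub_ne_zero.2 h)).ne', add_sub_cancel]

end PlaneVectors

section Ellipse

variable {β J : ℝ} {p q p' q' v w : ℝ × ℝ}

/-- The polar form of the ellipse `x² + β y² = 1`. -/
def ellipseForm (β : ℝ) (p q : ℝ × ℝ) : ℝ := p.1 * q.1 + β * (p.2 * q.2)

/-- The (not normalised) outward normal of the ellipse `x² + β y² = 1` at its point `p`. -/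
def ellipseNormal (β : ℝ) (p : ℝ × ℝ) : ℝ × ℝ := (p.1, β * p.2)

/-- The pole of the chord `pq` of the ellipse `x² + β y² = 1`, i.e. the intersection of the
tangents at `p` and `q` (any two antipodal points get the junk value `0`). -/
def chordPole (β : ℝ) (p q : ℝ × ℝ) : ℝ × ℝ := (1 + ellipseForm β p q)⁻¹ • (p + q)

lemma ip_ellipseNormal (β : ℝ) (p q : ℝ × ℝ) :
    ip p (ellipseNormal β q) = ellipseForm β p q := by
  simp only [ip, ellipseNormal, ellipseForm]; ring

lemma ellipseForm_neg_right (β : ℝ) (p q : ℝ × ℝ) :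
    ellipseForm β p (-q) = -ellipseForm β p q := by
  simp only [ellipseForm, Prod.fst_neg, Prod.snd_neg]; ring

lemma ellipseForm_neg_neg (β : ℝ) (p q : ℝ × ℝ) :
    ellipseForm β (-p) (-q) = ellipseForm β p q := by
  simp only [ellipseForm, Prod.fst_neg, Prod.snd_neg, neg_mul_neg]

lemma ellipseNormal_neg (β : ℝ) (p : ℝ × ℝ) : ellipseNormal β (-p) = -ellipseNormal β p := by
  simp [ellipseNormal]

lemma ellipseForm_self_pos (hβ : 0 < β) (hp : p ≠ 0) : 0 < ellipseForm β p p := by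
  rw [ne_eq, Prod.ext_iff, not_and_or] at hp
  rcases hp with h | h
  · exact add_pos_of_pos_of_nonneg (mul_self_pos.2 h) (mul_nonneg hβ.le (mul_self_nonneg _))
  · exact add_pos_of_nonneg_of_pos (mul_self_nonneg _) (mul_pos hβ (mul_self_pos.2 h))

lemma ellipseNormal_ne_zero (hp : ellipseForm β p p = 1) : ellipseNormal β p ≠ 0 := by
  intro h
  rw [← ip_ellipseNormal, h] at hp
  simp [ip] at hp

lemma one_add_ellipseForm_ne_zero (hβ : 0 < β) (hp : ellipseForm β p p = 1)
    (hq : ellipseForm β q q = 1) (h : p + q ≠ 0) : 1 + ellipseForm β p q ≠ 0 := by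
  have expand : ellipseForm β (p + q) (p + q) = 2 * (1 + ellipseForm β p q) := by
    simp only [ellipseForm, Prod.fst_add, Prod.snd_add] at *
    linear_combination hp + hq
  have := ellipseForm_self_pos hβ h
  rw [expand] at this
  exact (pos_of_mul_pos_right this zero_le_two).ne'

lemma chordPole_comm (β : ℝ) (p q : ℝ × ℝ) : chordPole β p q = chordPole β q p := by
  simp only [chordPole, ellipseForm, add_comm, mul_comm]

lemma chordPole_neg_neg (β : ℝ) (p q : ℝ × ℝ) :
    chordPole β (-p) (-q) = -chordPole β p q := by
  rw [chordPole, chordPole, ellipseForm_neg_neg, ← neg_add, smul_neg]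

lemma chordPole_of_add_eq_zero (β : ℝ) (h : p + q = 0) : chordPole β p q = 0 := by
  rw [chordPole, h, smul_zero]

lemma ip_chordPole_ellipseNormal_left (hp : ellipseForm β p p = 1)
    (h : 1 + ellipseForm β p q ≠ 0) : ip (chordPole β p q) (ellipseNormal β p) = 1 := by
  apply mul_left_cancel₀ h
  simp only [ip, chordPole, ellipseNormal, Prod.smul_fst, Prod.smul_snd, Prod.fst_add,
    Prod.snd_add, smul_eq_mul]
  field_simp
  simp only [ellipseForm] at *
  linear_combination hp

lemma ip_chordPole_ellipseNormal_right (hq : ellipseForm β q q = 1)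
    (h : 1 + ellipseForm β p q ≠ 0) : ip (chordPole β p q) (ellipseNormal β q) = 1 := by
  rw [chordPole_comm]
  exact ip_chordPole_ellipseNormal_left hq (by simpa only [ellipseForm, mul_comm] using h)

-- The expansion of `q` in the conjugate basis `p`, `(-β * p.2, p.1)`.
lemma cross_eq_of_ellipseForm_self_eq_one (hp : ellipseForm β p p = 1) (w q : ℝ × ℝ) :
    cross w q = ellipseForm β p q * cross w p + cross p q * ellipseForm β w p := by
  simp only [ellipseForm, cross] at *
  linear_combination (-(w.1 * q.2 - w.2 * q.1)) * hp

/-- `w` is the unit direction of the chord from `p` to `q` of the ellipse `x² + β y² = 1`,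
and this chord has Joachimsthal constant `J`. -/
structure IsChord (β J : ℝ) (p w q : ℝ × ℝ) : Prop where
  left_mem : ellipseForm β p p = 1
  right_mem : ellipseForm β q q = 1
  unit : ip w w = 1
  joachimsthal : ellipseForm β w p = -J
  exists_right_eq : ∃ l : ℝ, l ≠ 0 ∧ q = p + l • w

namespace IsChord

lemma direction_ne_zero (h : IsChord β J p w q) : w ≠ 0 := by
  rintro rfl
  simpa [ip] using h.unit

lemma right_eq (hβ : 0 < β) (h : IsChord β J p w q) :
    q = p + (2 * J / ellipseForm β w w) • w := by
  obtain ⟨l, hl, rfl⟩ := h.exists_right_eq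
  have hlength : l * ellipseForm β w w = 2 * J := by
    have hp := h.left_mem
    have hq := h.right_mem
    have hJ := h.joachimsthal
    apply mul_left_cancel₀ hl
    simp only [ellipseForm, Prod.fst_add, Prod.snd_add, Prod.smul_fst, Prod.smul_snd,
      smul_eq_mul] at *
    linear_combination hq - hp - 2 * l * hJ
  rw [← hlength, mul_div_cancel_right₀ _ (ellipseForm_self_pos hβ h.direction_ne_zero).ne']

lemma left_eq (hβ : 0 < β) (h : IsChord β J p w q) :
    p = q - (2 * J / ellipseForm β w w) • w :=
  eq_sub_of_add_eq (h.right_eq hβ).symm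

lemma joachimsthal_right (hβ : 0 < β) (h : IsChord β J p w q) : ellipseForm β w q = J := by
  have hlength := div_mul_cancel₀ (2 * J) (ellipseForm_self_pos hβ h.direction_ne_zero).ne'
  have hJ := h.joachimsthal
  rw [h.right_eq hβ]
  generalize 2 * J / ellipseForm β w w = l at hlength
  simp only [ellipseForm, Prod.fst_add, Prod.snd_add, Prod.smul_fst, Prod.smul_snd,
    smul_eq_mul] at *
  linear_combination hJ + hlength

lemma cross_right (h : IsChord β J p w q) : cross w q = cross w p := by
  obtain ⟨l, -, rfl⟩ := h.exists_right_eq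
  simp only [cross, Prod.fst_add, Prod.snd_add, Prod.smul_fst, Prod.smul_snd, smul_eq_mul]
  ring

end IsChord

-- The pole of `pq` has opposite signed distances to the line through `p` with direction `w`
-- and to the line through `q` with direction `v`.
lemma cross_add_chordPole (hp : ellipseForm β p p = 1) (hq : ellipseForm β q q = 1)
    (h : ellipseForm β w p = ellipseForm β v q) (hne : 1 + ellipseForm β p q ≠ 0) :
    cross (w + v) (chordPole β p q) = cross w p + cross v q := by
  have hw := cross_eq_of_ellipseForm_self_eq_one hp w q
  have hv := cross_eq_of_ellipseForm_self_eq_one hq v p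
  apply mul_left_cancel₀ hne
  simp only [chordPole, cross, Prod.fst_add, Prod.snd_add, Prod.smul_fst, Prod.smul_snd,
    smul_eq_mul]
  field_simp
  rw [h] at hw
  simp only [ellipseForm, cross] at *
  linear_combination hw + hv

lemma chordPole_eq_of_reversed (hβ : 0 < β) (h : IsChord β J p w p')
    (h' : IsChord β J q (-w) q') : chordPole β p q = chordPole β p' q' := by
  have hlength := div_mul_cancel₀ (2 * J) (ellipseForm_self_pos hβ h.direction_ne_zero).ne'
  have hp := h.joachimsthal
  have hq := h'.joachimsthal
  rw [h.right_eq hβ, h'.right_eq hβ, ellipseForm_neg_neg]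
  generalize 2 * J / ellipseForm β w w = l at hlength
  have hsum : p + l • w + (q + l • -w) = p + q := by rw [smul_neg]; abel
  have hpolar : ellipseForm β (p + l • w) (q + l • -w) = ellipseForm β p q := by
    simp only [ellipseForm, Prod.fst_add, Prod.snd_add, Prod.smul_fst, Prod.smul_snd,
      smul_eq_mul, Prod.fst_neg, Prod.snd_neg] at *
    linear_combination -l * hp - l * hq - l * hlength
  rw [chordPole, chordPole, hsum, hpolar]

-- Unless `w + v = 0`, both poles lie on the line where the signed distances to the two chords
-- are opposite, and this line is orthogonal to `w - v` as `w` and `v` are unit vectors.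
lemma ip_chordPole_sub_eq (hβ : 0 < β) (h : IsChord β J p w p') (h' : IsChord β J q v q')
    (hne : p + q ≠ 0) (hne' : p' + q' ≠ 0) :
    ip (chordPole β p q) (w - v) = ip (chordPole β p' q') (w - v) := by
  by_cases hwv : w + v = 0
  · obtain rfl : v = -w := (neg_eq_of_add_eq_zero_right hwv).symm
    rw [chordPole_eq_of_reversed hβ h h']
  have hleft := cross_add_chordPole h.left_mem h'.left_mem
    (h.joachimsthal.trans h'.joachimsthal.symm)
    (one_add_ellipseForm_ne_zero hβ h.left_mem h'.left_mem hne)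
  have hright := cross_add_chordPole h.right_mem h'.right_mem
    ((h.joachimsthal_right hβ).trans (h'.joachimsthal_right hβ).symm)
    (one_add_ellipseForm_ne_zero hβ h.right_mem h'.right_mem hne')
  rw [h.cross_right, h'.cross_right, ← hleft] at hright
  have hcross : cross (w + v) (chordPole β p q - chordPole β p' q') = 0 := by
    simp only [cross, Prod.fst_sub, Prod.snd_sub] at *
    linear_combination -hright
  have horth : ip (w - v) (w + v) = 0 := by
    have hw := h.unit
    have hv := h'.unit
    simp only [ip, Prod.fst_sub, Prod.snd_sub, Prod.fst_add, Prod.snd_add] at *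
    linear_combination hw - hv
  have := ip_eq_zero_of_cross_eq_zero hwv hcross horth
  simp only [ip, Prod.fst_sub, Prod.snd_sub] at *
  linear_combination this

end Ellipse

/-- `x` is a billiard trajectory in the ellipse `x² + β y² = 1` with Joachimsthal constant `J`.
The constancy of `J` makes the incoming and the outgoing direction at a vertex differ, so that
the law of reflection amounts to their difference being normal to the ellipse. -/
structure IsBilliard (β J : ℝ) (x : ℤ → ℝ × ℝ) : Prop where
  mem : ∀ k, ellipseForm β (x k) (x k) = 1
  ne : ∀ k, x (k + 1) ≠ x k
  joachimsthal : ∀ k, ellipseForm β (dirZ x k) (x k) = -J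
  reflect : ∀ k, ∃ μ : ℝ, dirZ x (k + 1) = dirZ x k - μ • ellipseNormal β (x (k + 1))

/-- The coefficient of the normal `ellipseNormal β (x (k + 1))` in `dirZ x k - dirZ x (k + 1)`,
for a billiard trajectory `x`. -/
def turn (x : ℤ → ℝ × ℝ) (k : ℤ) : ℝ := ip (x (k + 1)) (dirZ x k - dirZ x (k + 1))

/-- The function whose differences are the differences of the turns of `x` and `y`: the inner
product of `dirZ x k - dirZ y k` with the pole of either chord joining corresponding ends of
the `k`-th segments, the second chord being used when the first one is a diameter. -/
def polePotential (β : ℝ) (x y : ℤ → ℝ × ℝ) (k : ℤ) : ℝ :=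
  if x k + y k = 0 then ip (chordPole β (x (k + 1)) (y (k + 1))) (dirZ x k - dirZ y k)
  else ip (chordPole β (x k) (y k)) (dirZ x k - dirZ y k)

-- When both chords are diameters, both sides vanish by the junk value of `chordPole`.
lemma polePotential_eq_left (β : ℝ) {x y : ℤ → ℝ × ℝ} {k : ℤ}
    (h : x (k + 1) + y (k + 1) = 0) :
    polePotential β x y k = ip (chordPole β (x k) (y k)) (dirZ x k - dirZ y k) := by
  rw [polePotential]
  split_ifs with h₀
  · rw [chordPole_of_add_eq_zero β h, chordPole_of_add_eq_zero β h₀]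
  · rfl

namespace IsBilliard

variable {β J : ℝ} {x y : ℤ → ℝ × ℝ}

lemma isChord (hx : IsBilliard β J x) (k : ℤ) :
    IsChord β J (x k) (dirZ x k) (x (k + 1)) where
  left_mem := hx.mem k
  right_mem := hx.mem (k + 1)
  unit := ip_dirZ_self (hx.ne k)
  joachimsthal := hx.joachimsthal k
  exists_right_eq :=
    ⟨_, (nrm_pos (sub_ne_zero.2 (hx.ne k))).ne', (add_nrm_smul_dirZ (hx.ne k)).symm⟩

lemma dirZ_succ (hx : IsBilliard β J x) (k : ℤ) :
    dirZ x (k + 1) = dirZ x k - turn x k • ellipseNormal β (x (k + 1)) := by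
  obtain ⟨μ, hμ⟩ := hx.reflect k
  have hturn : turn x k = μ * ellipseForm β (x (k + 1)) (x (k + 1)) := by
    rw [turn, hμ, sub_sub_cancel, ← ip_ellipseNormal]
    simp only [ip, Prod.smul_fst, Prod.smul_snd, smul_eq_mul]
    ring
  rw [hturn, hx.mem, mul_one, hμ]

lemma ip_dirZ_dirZ_succ (hβ : 0 < β) (hx : IsBilliard β J x) (k : ℤ) :
    ip (dirZ x k) (dirZ x (k + 1)) = 1 - J * turn x k := by
  have hunit := (hx.isChord k).unit
  have hJ := (hx.isChord k).joachimsthal_right hβ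
  rw [hx.dirZ_succ k]
  rw [← ip_ellipseNormal] at hJ
  simp only [ip, Prod.fst_sub, Prod.snd_sub, Prod.smul_fst, Prod.smul_snd, smul_eq_mul] at *
  linear_combination hunit - turn x k * hJ

lemma turn_mul_ip_ellipseNormal (hβ : 0 < β) (hx : IsBilliard β J x) (k : ℤ) :
    turn x k * ip (ellipseNormal β (x (k + 1))) (ellipseNormal β (x (k + 1))) = 2 * J := by
  have hin := (hx.isChord k).joachimsthal_right hβ
  have hout := (hx.isChord (k + 1)).joachimsthal
  rw [hx.dirZ_succ k] at hout
  rw [← ip_ellipseNormal] at hin hout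
  simp only [ip, Prod.fst_sub, Prod.snd_sub, Prod.smul_fst, Prod.smul_snd, smul_eq_mul] at *
  linear_combination hin - hout

lemma turn_sub_turn_of_add_ne_zero (hβ : 0 < β) (hx : IsBilliard β J x) (hy : IsBilliard β J y)
    {k : ℤ} (h : x (k + 1) + y (k + 1) ≠ 0) :
    turn x k - turn y k = ip (chordPole β (x (k + 1)) (y (k + 1))) (dirZ x k - dirZ y k) -
      ip (chordPole β (x (k + 1)) (y (k + 1))) (dirZ x (k + 1) - dirZ y (k + 1)) := by
  have hne := one_add_ellipseForm_ne_zero hβ (hx.mem _) (hy.mem _) h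
  have hleft := ip_chordPole_ellipseNormal_left (hx.mem _) hne
  have hright := ip_chordPole_ellipseNormal_right (hy.mem _) hne
  rw [hx.dirZ_succ k, hy.dirZ_succ k]
  simp only [ip, Prod.fst_sub, Prod.snd_sub, Prod.smul_fst, Prod.smul_snd, smul_eq_mul] at *
  linear_combination turn y k * hright - turn x k * hleft

lemma turn_eq_turn_of_eq_neg (hβ : 0 < β) (hx : IsBilliard β J x) (hy : IsBilliard β J y)
    {k : ℤ} (h : y (k + 1) = -x (k + 1)) : turn y k = turn x k := by
  have hpos := ip_self_pos (ellipseNormal_ne_zero (hx.mem (k + 1)))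
  have hnormal := hy.turn_mul_ip_ellipseNormal hβ k
  rw [h, ellipseNormal_neg, ← hx.turn_mul_ip_ellipseNormal hβ k] at hnormal
  apply mul_right_cancel₀ hpos.ne'
  simpa only [ip, Prod.fst_neg, Prod.snd_neg, neg_mul_neg] using hnormal

lemma dirZ_of_eq_neg (hβ : 0 < β) (hx : IsBilliard β J x) (hy : IsBilliard β J y)
    {k : ℤ} (h : y (k + 1) = -x (k + 1)) :
    (dirZ y k = -dirZ x k ∧ dirZ y (k + 1) = -dirZ x (k + 1)) ∨
      (dirZ y k = dirZ x (k + 1) ∧ dirZ y (k + 1) = dirZ x k) := by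
  have hx_in := (hx.isChord k).joachimsthal_right hβ
  have hx_out := (hx.isChord (k + 1)).joachimsthal
  have hy_in := (hy.isChord k).joachimsthal_right hβ
  rw [h, ellipseForm_neg_right] at hy_in
  have hx_succ := hx.dirZ_succ k
  have hy_succ := hy.dirZ_succ k
  rw [hx.turn_eq_turn_of_eq_neg hβ hy h, h, ellipseNormal_neg, smul_neg,
    sub_neg_eq_add] at hy_succ
  have hdir : dirZ y k = -dirZ x k ∨ dirZ y k = dirZ x (k + 1) :=
    eq_neg_or_eq_of_ip_eq (ellipseNormal_ne_zero (hx.mem (k + 1))) (hy.isChord k).unit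
      (hx.isChord (k + 1)).unit hx_succ
      (by rw [ip_ellipseNormal, ip_ellipseNormal, hx_in, hx_out])
      (by rw [ip_ellipseNormal, ip_ellipseNormal, hx_out, ← hy_in, neg_neg])
  refine hdir.imp (fun hback => ⟨hback, ?_⟩) (fun hfwd => ⟨hfwd, ?_⟩)
  · rw [hy_succ, hback, hx_succ, neg_sub, neg_add_eq_sub]
  · rw [hy_succ, hfwd, hx_succ, sub_add_cancel]

lemma neighbours_of_eq_neg (hβ : 0 < β) (hx : IsBilliard β J x) (hy : IsBilliard β J y)
    {k : ℤ} (h : y (k + 1) = -x (k + 1)) :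
    (y k = -x k ∧ y (k + 1 + 1) = -x (k + 1 + 1)) ∨
      (y k = -x (k + 1 + 1) ∧ y (k + 1 + 1) = -x k ∧
        dirZ y k = dirZ x (k + 1) ∧ dirZ y (k + 1) = dirZ x k) := by
  have hx_left := (hx.isChord k).left_eq hβ
  have hx_right := (hx.isChord (k + 1)).right_eq hβ
  have hy_left := (hy.isChord k).left_eq hβ
  have hy_right := (hy.isChord (k + 1)).right_eq hβ
  refine (dirZ_of_eq_neg hβ hx hy h).imp (fun ⟨hin, hout⟩ => ?_)
    (fun ⟨hin, hout⟩ => ⟨?_, ?_, hin, hout⟩)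
  · rw [hin, ellipseForm_neg_neg, h] at hy_left
    rw [hout, ellipseForm_neg_neg, h] at hy_right
    exact ⟨by rw [hy_left, hx_left, smul_neg]; abel, by rw [hy_right, hx_right, smul_neg]; abel⟩
  · rw [hy_left, hx_right, hin, h]; abel
  · rw [hy_right, hx_left, hout, h]; abel

lemma polePotential_eq_right (hβ : 0 < β) (hx : IsBilliard β J x) (hy : IsBilliard β J y)
    {k : ℤ} (h : x (k + 1) + y (k + 1) ≠ 0) :
    polePotential β x y k =
      ip (chordPole β (x (k + 1)) (y (k + 1))) (dirZ x k - dirZ y k) := by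
  rw [polePotential]
  split_ifs with h₀
  · rfl
  · exact ip_chordPole_sub_eq hβ (hx.isChord k) (hy.isChord k) h₀ h

lemma polePotential_succ_eq_of_eq_neg (hβ : 0 < β) (hx : IsBilliard β J x)
    (hy : IsBilliard β J y) {k : ℤ} (h : y (k + 1) = -x (k + 1)) :
    polePotential β x y (k + 1) = polePotential β x y k := by
  have hsum : x (k + 1) + y (k + 1) = 0 := by rw [h, add_neg_cancel]
  rw [polePotential_eq_left β hsum, polePotential, if_pos hsum]
  rcases neighbours_of_eq_neg hβ hx hy h with ⟨hpred, hsucc⟩ | ⟨hpred, hsucc, hin, hout⟩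
  · rw [chordPole_of_add_eq_zero β (by rw [hsucc, add_neg_cancel]),
      chordPole_of_add_eq_zero β (by rw [hpred, add_neg_cancel])]
    simp only [ip, Prod.fst_zero, Prod.snd_zero, zero_mul]
  · have hpole : chordPole β (x (k + 1 + 1)) (-x k) = -chordPole β (x k) (-x (k + 1 + 1)) := by
      rw [← chordPole_neg_neg, neg_neg, chordPole_comm]
    rw [hpred, hsucc, hin, hout, hpole]
    simp only [ip, Prod.fst_neg, Prod.snd_neg, Prod.fst_sub, Prod.snd_sub]
    ring

lemma turn_sub_turn (hβ : 0 < β) (hx : IsBilliard β J x) (hy : IsBilliard β J y) (k : ℤ) :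
    turn x k - turn y k = polePotential β x y k - polePotential β x y (k + 1) := by
  by_cases h : x (k + 1) + y (k + 1) = 0
  · have hneg := eq_neg_of_add_eq_zero_right h
    rw [turn_eq_turn_of_eq_neg hβ hx hy hneg, polePotential_succ_eq_of_eq_neg hβ hx hy hneg,
      sub_self, sub_self]
  · rw [turn_sub_turn_of_add_ne_zero hβ hx hy h, polePotential_eq_right hβ hx hy h,
      polePotential, if_neg h]

end IsBilliard

lemma dirZ_periodic {x : ℤ → ℝ × ℝ} {T : ℤ} (hx : Function.Periodic x T) :
    Function.Periodic (dirZ x) T := fun k => by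
  rw [dirZ, dirZ, add_right_comm, hx, hx]

lemma polePotential_periodic (β : ℝ) {x y : ℤ → ℝ × ℝ} {T : ℤ} (hx : Function.Periodic x T)
    (hy : Function.Periodic y T) : Function.Periodic (polePotential β x y) T := fun k => by
  simp only [polePotential, add_right_comm k T 1, hx _, hy _, dirZ_periodic hx _,
    dirZ_periodic hy _]

theorem sum_of_cosines_constant_general {β J : ℝ} (hβ : 0 < β) {n : ℕ} {x y : ℤ → ℝ × ℝ}
    (hx : IsBilliard β J x) (hy : IsBilliard β J y) (hxn : Function.Periodic x n)
    (hyn : Function.Periodic y n) :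
    ∑ k ∈ Finset.range n, ip (dirZ x k) (dirZ x (k + 1)) =
    ∑ k ∈ Finset.range n, ip (dirZ y k) (dirZ y (k + 1)) := by
  rw [← sub_eq_zero, ← Finset.sum_sub_distrib]
  calc ∑ k ∈ Finset.range n, (ip (dirZ x k) (dirZ x (k + 1)) - ip (dirZ y k) (dirZ y (k + 1)))
      = ∑ k ∈ Finset.range n, -J * (turn x k - turn y k) := by
        refine Finset.sum_congr rfl fun k _ => ?_
        rw [hx.ip_dirZ_dirZ_succ hβ, hy.ip_dirZ_dirZ_succ hβ]
        ring
    _ = -J * ∑ k ∈ Finset.range n,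
          (polePotential β x y (k : ℕ) - polePotential β x y (k + 1 : ℕ)) := by
        simp only [hx.turn_sub_turn hβ hy, Finset.mul_sum, Nat.cast_add, Nat.cast_one]
    _ = -J * (polePotential β x y (0 : ℕ) - polePotential β x y n) := by
        rw [Finset.sum_range_sub' fun k : ℕ => polePotential β x y k]
    _ = 0 := by
        rw [Nat.cast_zero, (polePotential_periodic β hxn hyn).eq, sub_self, mul_zero]

section Caustic

variable {c s : ℝ}

lemma mem_ellipseC_iff {q : ℝ × ℝ} :
    q ∈ ellipseC c ↔ ellipseForm (1 - c ^ 2)⁻¹ q q = 1 := by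
  simp only [ellipseC, Set.mem_ofPred_eq, ellipseForm, div_eq_inv_mul, sq]

lemma nuC_eq (c : ℝ) (q : ℝ × ℝ) :
    nuC c q = (nrm (ellipseNormal (1 - c ^ 2)⁻¹ q))⁻¹ • ellipseNormal (1 - c ^ 2)⁻¹ q := by
  simp only [nuC, ellipseNormal, div_eq_inv_mul]

lemma cross_sq_of_tangent {t u l : ℝ} {p w : ℝ × ℝ} (htan : s * t ^ 2 + (s - c ^ 2) * u ^ 2 = 1)
    (hl : l ≠ 0) (hp : t * p.1 + u * p.2 = 1)
    (hq : t * (p + l • w).1 + u * (p + l • w).2 = 1) :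
    cross w p ^ 2 = s * w.2 ^ 2 + (s - c ^ 2) * w.1 ^ 2 := by
  have hw : t * w.1 + u * w.2 = 0 := by
    apply mul_left_cancel₀ hl
    simp only [Prod.fst_add, Prod.snd_add, Prod.smul_fst, Prod.smul_snd, smul_eq_mul] at hq
    linear_combination hq - hp
  have ht : t * cross w p = -w.2 := by
    simp only [cross]; linear_combination p.2 * hw - w.2 * hp
  have hu : u * cross w p = w.1 := by
    simp only [cross]; linear_combination w.1 * hp - p.1 * hw
  linear_combination -cross w p ^ 2 * htan + s * (t * cross w p - w.2) * ht +
    (s - c ^ 2) * (u * cross w p + w.1) * hu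

lemma ellipseForm_sq_of_cross_sq (hc : c ^ 2 ≠ 1) {p w : ℝ × ℝ} (hw : ip w w = 1)
    (hp : ellipseForm (1 - c ^ 2)⁻¹ p p = 1)
    (h : cross w p ^ 2 = s * w.2 ^ 2 + (s - c ^ 2) * w.1 ^ 2) :
    ellipseForm (1 - c ^ 2)⁻¹ w p ^ 2 = (1 - s) / (1 - c ^ 2) := by
  have hβ : (1 - c ^ 2)⁻¹ * (1 - c ^ 2) = 1 := inv_mul_cancel₀ (sub_ne_zero.2 hc.symm)
  rw [div_eq_inv_mul]
  generalize (1 - c ^ 2)⁻¹ = β at *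
  have lagrange : ellipseForm β w p ^ 2 =
      ellipseForm β w w * ellipseForm β p p - β * cross w p ^ 2 := by
    simp only [ellipseForm, cross]; ring
  rw [lagrange, hp, h]
  simp only [ellipseForm, ip] at *
  linear_combination β * (1 - s) * hw - w.1 ^ 2 * hβ

lemma ellipseForm_direction_neg {β l : ℝ} (hβ : 0 < β) {p w : ℝ × ℝ} (hw : w ≠ 0) (hl : 0 < l)
    (hp : ellipseForm β p p = 1) (hq : ellipseForm β (p + l • w) (p + l • w) = 1) :
    ellipseForm β w p < 0 := by
  have hpos := mul_pos hl (ellipseForm_self_pos hβ hw)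
  have : 2 * ellipseForm β w p = -(l * ellipseForm β w w) := by
    apply mul_left_cancel₀ hl.ne'
    simp only [ellipseForm, Prod.fst_add, Prod.snd_add, Prod.smul_fst, Prod.smul_snd,
      smul_eq_mul] at *
    linear_combination hq - hp
  linarith

lemma IsPeriodicCausticTraj.isBilliard (hc : c ^ 2 < 1) {n : ℕ} {x : ℤ → ℝ × ℝ}
    (hx : IsPeriodicCausticTraj c s n x) :
    IsBilliard (1 - c ^ 2)⁻¹ √((1 - s) / (1 - c ^ 2)) x := by
  obtain ⟨-, hmem, hne, hreflect, htangent⟩ := hx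
  simp only [mem_ellipseC_iff] at hmem
  refine ⟨hmem, hne, fun k => ?_, fun k => ?_⟩
  · obtain ⟨t, u, htan, hp, hq⟩ := htangent k
    have hlength := nrm_pos (sub_ne_zero.2 (hne k))
    have hunit := ip_dirZ_self (hne k)
    have hend := hmem (k + 1)
    rw [← add_nrm_smul_dirZ (hne k)] at hq hend
    have hsq := ellipseForm_sq_of_cross_sq hc.ne hunit (hmem k)
      (cross_sq_of_tangent htan hlength.ne' hp hq)
    have hdir : dirZ x k ≠ 0 := fun h => by simp [h, ip] at hunit
    have hneg := ellipseForm_direction_neg (inv_pos.2 (sub_pos.2 hc)) hdir hlength (hmem k) hend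
    rw [← hsq, Real.sqrt_sq_eq_abs, abs_of_neg hneg, neg_neg]
  · have := hreflect (k + 1)
    rw [add_sub_cancel_right, nuC_eq, smul_smul] at this
    exact ⟨_, this⟩

end Caustic

/-- The sum of the cosines of the angles between consecutive segments of an `n`-periodic
billiard trajectory depends only on the caustic, not on the trajectory. -/
theorem sum_of_cosines_constant (c s : ℝ) (hc0 : 0 < c) (hc1 : c < 1)
    (n : ℕ) (hn : 2 ≤ n) (x y : ℤ → ℝ × ℝ)
    (hx : IsPeriodicCausticTraj c s n x) (hy : IsPeriodicCausticTraj c s n y) :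
    ∑ k ∈ Finset.range n, ip (dirZ x k) (dirZ x (k + 1)) =
    ∑ k ∈ Finset.range n, ip (dirZ y k) (dirZ y (k + 1)) := by
  have hc : c ^ 2 < 1 := pow_lt_one₀ hc0.le hc1 two_ne_zero
  exact sum_of_cosines_constant_general (inv_pos.2 (sub_pos.2 hc)) (hx.isBilliard hc)
    (hy.isBilliard hc) hx.1 hy.1
end
end
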